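/- Let θ be a cylindric diagram in C_ω and T ∈ LE(θ) a standard tableau. Define the heap order ⪯_T on ℤ≥1 as the reflexive-transitive closure of the relation: a ⪯_T b whenever a ≤ b (as integers) and, writing i_a = con(T⁻¹(a)) and i_b = con(T⁻¹(b)), either i_a = i_b or s_{i_a} s_{i_b} ≠ s_{i_b} s_{i_a} in the affine Weyl group W. Then the map T : (θ, ≤) → (ℤ≥1, ⪯_T) is an order isomorphism. -/

import Mathlib

/-!
Two cells whose contents are equal or adjacent in `ℤ/κℤ` are comparable in the cylinder
(`comparable_of_con`): modulo `ω` their difference is `(s, s + ε)` with `ε ∈ {0, 1, -1}`.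
Two simple reflections commute unless their indices are adjacent (`sFun_comm`,
`sFun_not_comm`). Hence generating relations of the heap order join comparable cells, and the
tableau condition orients the comparison correctly (`cle_of_heapRel`); by transitivity the heap
order is contained in the cylinder order.

Conversely, if `e a ≤ e b`, then `e a` is a translate of `e b` by `(u, v)` with `u, v ≥ 0`.
A lattice path of unit steps joins `e a` to `e b`; it stays in the filter `θ`, and each
step changes the content by `±1`, so it is a generating relation of the heap order
(`heap_of_translate`).
-/

namespace CylPaper

/-! ## The cylinder and its order -/

abbrev Z2 : Type := ℤ × ℤ

/-- The partial order on ℤ²: (a,b) ≤ (c,d) iff a ≥ c and b ≥ d. -/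
def le2 (x y : Z2) : Prop := y.1 ≤ x.1 ∧ y.2 ≤ x.2

/-- The period ω = (m, -ℓ). -/
def om (m l : ℕ) : Z2 := ((m : ℤ), -(l : ℤ))

/-- The cylinder C_ω = ℤ²/ℤω. -/
abbrev Cyl (m l : ℕ) : Type := Z2 ⧸ AddSubgroup.zmultiples (om m l)

/-- The natural projection π : ℤ² → C_ω. -/
def pr (m l : ℕ) : Z2 →+ Cyl m l := QuotientAddGroup.mk' _

/-- The induced order relation on the cylinder: x ≤ y iff there are lifts with x̃ ≤ ỹ. -/
def cle (m l : ℕ) (x y : Cyl m l) : Prop :=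
  ∃ a b : Z2, pr m l a = x ∧ pr m l b = y ∧ le2 a b

/-- A cylindric diagram: a non-trivial order filter of C_ω. -/
def IsCylindric (m l : ℕ) (θ : Set (Cyl m l)) : Prop :=
  θ.Nonempty ∧ θ ≠ Set.univ ∧ ∀ x ∈ θ, ∀ y, cle m l x y → y ∈ θ

/-- A periodic diagram of period ω: a non-trivial order filter of ℤ² with Θ + ω = Θ. -/
def IsPeriodic (m l : ℕ) (Θ : Set Z2) : Prop :=
  Θ.Nonempty ∧ Θ ≠ Set.univ ∧ (∀ x ∈ Θ, ∀ y, le2 x y → y ∈ Θ) ∧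
    (fun p => p + om m l) '' Θ = Θ

/-- A proper order ideal ξ of the sub-poset θ of C_ω. -/
def IsProperIdealOf (m l : ℕ) (θ ξ : Set (Cyl m l)) : Prop :=
  ξ ⊆ θ ∧ ξ ≠ θ ∧ ∀ x ∈ ξ, ∀ y ∈ θ, cle m l y x → y ∈ ξ

/-- A proper order ideal of the whole cylinder C_ω. -/
def IsProperIdealC (m l : ℕ) (J : Set (Cyl m l)) : Prop :=
  J ≠ Set.univ ∧ ∀ x ∈ J, ∀ y, cle m l y x → y ∈ J

/-- A proper order filter of the whole cylinder C_ω. -/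
def IsProperFilterC (m l : ℕ) (J : Set (Cyl m l)) : Prop :=
  J ≠ Set.univ ∧ ∀ x ∈ J, ∀ y, cle m l x y → y ∈ J

/-! ## The content map -/

/-- The content on ℤ²: (a,b) ↦ b - a mod κ (κ = m + ℓ). -/
def conHom (m l : ℕ) : Z2 →+ ZMod (m + l) where
  toFun p := ((p.2 - p.1 : ℤ) : ZMod (m + l))
  map_zero' := by simp
  map_add' a b := by
    simp only [Prod.fst_add, Prod.snd_add]
    push_cast
    ring

lemma conHom_om (m l : ℕ) : conHom m l (om m l) = 0 := by
  have h : ((m + l : ℕ) : ZMod (m + l)) = 0 := ZMod.natCast_self _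
  show ((((om m l).2 - (om m l).1 : ℤ)) : ZMod (m + l)) = 0
  simp only [om]
  push_cast at h ⊢
  linear_combination -h

/-- The content map con : C_ω → ℤ/κℤ. -/
def con (m l : ℕ) : Cyl m l →+ ZMod (m + l) :=
  QuotientAddGroup.lift _ (conHom m l) (by
    intro x hx
    obtain ⟨k, rfl⟩ := AddSubgroup.mem_zmultiples_iff.mp hx
    simp only [AddMonoidHom.mem_ker, map_zsmul, conHom_om, smul_zero])

/-! ## The affine root system of type A_{κ-1}^{(1)} -/

/-- h*, with coordinates in the basis {α_i (i ∈ ℤ/κℤ), Λ₀}: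
`(c, t)` stands for `Σ_i c_i α_i + t Λ₀`. -/
abbrev Hw (κ : ℕ) : Type := (ZMod κ → ℚ) × ℚ

/-- The affine Cartan matrix of type A_{κ-1}^{(1)} (valid for κ ≥ 2). -/
def cartan (κ : ℕ) (i j : ZMod κ) : ℚ :=
  (if i = j then 2 else 0) + (if i - j = 1 then -1 else 0) + (if i - j = -1 then -1 else 0)

/-- The simple root α_i. -/
def alphaR (κ : ℕ) (i : ZMod κ) : Hw κ := (Pi.single i 1, 0)

/-- The null root δ = Σ_i α_i. -/
def deltaR (κ : ℕ) : Hw κ := (fun _ => 1, 0)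

/-- The pairing ⟨ζ, α_i^∨⟩. -/
noncomputable def pairSimple (κ : ℕ) (ζ : Hw κ) (i : ZMod κ) : ℚ :=
  (∑ᶠ j, ζ.1 j * cartan κ i j) + ζ.2 * (if i = 0 then 1 else 0)

/-- The pairing ⟨ζ, β^∨⟩ where β = Σ_i k_i α_i lies in the root lattice,
so β^∨ = Σ_i k_i α_i^∨. -/
noncomputable def pairCo (κ : ℕ) (ζ β : Hw κ) : ℚ := ∑ᶠ i, β.1 i * pairSimple κ ζ i

/-- The simple reflection s_i : ζ ↦ ζ - ⟨ζ, α_i^∨⟩ α_i, as a map on h*. -/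
noncomputable def sFun (κ : ℕ) (i : ZMod κ) (ζ : Hw κ) : Hw κ :=
  ζ - pairSimple κ ζ i • alphaR κ i

/-- The element s_{i₁} s_{i₂} ⋯ s_{i_r} of the affine Weyl group
given by a word [i₁, i₂, …, i_r]. -/
noncomputable def wordProd (κ : ℕ) (L : List (ZMod κ)) : Hw κ → Hw κ :=
  (L.map (sFun κ)).foldr (· ∘ ·) id

/-- Membership in the affine Weyl group W (generated by the s_i). -/
def Wmem (κ : ℕ) (w : Hw κ → Hw κ) : Prop := ∃ L : List (ZMod κ), wordProd κ L = w

/-- The Coxeter length: the least r such that w is a product of r simple reflections. -/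
noncomputable def len (κ : ℕ) (w : Hw κ → Hw κ) : ℕ :=
  sInf {r : ℕ | ∃ L : List (ZMod κ), L.length = r ∧ wordProd κ L = w}

/-- Q₊ = Σ_i ℤ≥0 α_i. -/
def QPos (κ : ℕ) : Set (Hw κ) := {x | x.2 = 0 ∧ ∀ i, ∃ n : ℕ, x.1 i = (n : ℚ)}

/-- The set R = WΠ of real roots. -/
def Rset (κ : ℕ) : Set (Hw κ) :=
  {β | ∃ (L : List (ZMod κ)) (i : ZMod κ), β = wordProd κ L (alphaR κ i)}

/-- Positive real roots R₊ = R ∩ Q₊. -/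
def Rpos (κ : ℕ) : Set (Hw κ) := Rset κ ∩ QPos κ

/-- Negative real roots R₋ = -R₊. -/
def Rneg (κ : ℕ) : Set (Hw κ) := {β | -β ∈ Rpos κ}

/-- The inversion set R(w) = R₊ ∩ w R₋. -/
def invSet (κ : ℕ) (w : Hw κ → Hw κ) : Set (Hw κ) := Rpos κ ∩ (w '' Rneg κ)

/-- The weak right Bruhat order on W. -/
def wble (κ : ℕ) (v w : Hw κ → Hw κ) : Prop :=
  Relation.ReflTransGen
    (fun u u' => ∃ i : ZMod κ, u' = u ∘ sFun κ i ∧ len κ u' = len κ u + 1) v w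

/-- The weak Bruhat interval [e, w]. -/
def bint (κ : ℕ) (w : Hw κ → Hw κ) : Set (Hw κ → Hw κ) :=
  {x | wble κ id x ∧ wble κ x w}

/-- A single commutation move on words: swap adjacent letters i, j with i - j ≠ 0, ±1. -/
def CommMove (κ : ℕ) (L1 L2 : List (ZMod κ)) : Prop :=
  ∃ (u v : List (ZMod κ)) (i j : ZMod κ),
    i - j ≠ 0 ∧ i - j ≠ 1 ∧ i - j ≠ -1 ∧
    L1 = u ++ i :: j :: v ∧ L2 = u ++ j :: i :: v

/-- A word is reduced if its length equals the Coxeter length of its product. -/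
def IsReducedWord (κ : ℕ) (L : List (ZMod κ)) : Prop :=
  len κ (wordProd κ L) = L.length

/-- Fully commutative: any reduced word for w can be obtained from any other
using only commutation moves. -/
def FullyComm (κ : ℕ) (w : Hw κ → Hw κ) : Prop :=
  ∀ L1 L2 : List (ZMod κ),
    IsReducedWord κ L1 → wordProd κ L1 = w →
    IsReducedWord κ L2 → wordProd κ L2 = w →
    Relation.ReflTransGen (CommMove κ) L1 L2

/-! ## Hooks, bottom set and weights attached to a cylindric diagram -/

/-- α(x) = α_{con(x)}. -/
def alC (m l : ℕ) (x : Cyl m l) : Hw (m + l) := alphaR (m + l) (con m l x)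

/-- arm(x) = {x + π(0,k) : k ≥ 1} ∩ θ. -/
def armSet (m l : ℕ) (θ : Set (Cyl m l)) (x : Cyl m l) : Set (Cyl m l) :=
  {y | y ∈ θ ∧ ∃ k : ℕ, 1 ≤ k ∧ y = x + pr m l (0, (k : ℤ))}

/-- leg(x) = {x + π(k,0) : k ≥ 1} ∩ θ. -/
def legSet (m l : ℕ) (θ : Set (Cyl m l)) (x : Cyl m l) : Set (Cyl m l) :=
  {y | y ∈ θ ∧ ∃ k : ℕ, 1 ≤ k ∧ y = x + pr m l ((k : ℤ), 0)}

/-- The colored hook length hk(x) = α(x) + Σ_{y∈arm(x)} α(y) + Σ_{y∈leg(x)} α(y). -/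
noncomputable def hk (m l : ℕ) (θ : Set (Cyl m l)) (x : Cyl m l) : Hw (m + l) :=
  alC m l x + (∑ᶠ y ∈ armSet m l θ x, alC m l y) + (∑ᶠ y ∈ legSet m l θ x, alC m l y)

/-- x is the minimum cell b_i of content i in θ. -/
def IsBottomCell (m l : ℕ) (θ : Set (Cyl m l)) (i : ZMod (m + l)) (x : Cyl m l) : Prop :=
  x ∈ θ ∧ con m l x = i ∧ ∀ y ∈ θ, con m l y = i → cle m l x y

/-- The bottom set Γ = {b_i : i ∈ ℤ/κℤ}. -/
def btm (m l : ℕ) (θ : Set (Cyl m l)) : Set (Cyl m l) :=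
  {x | ∃ i, IsBottomCell m l θ i x}

/-- The maximal elements Γ_max of the bottom set. -/
def btmMax (m l : ℕ) (θ : Set (Cyl m l)) : Set (Cyl m l) :=
  {x | x ∈ btm m l θ ∧ ∀ y ∈ btm m l θ, cle m l x y → y = x}

/-- The minimal elements Γ_min of the bottom set. -/
def btmMin (m l : ℕ) (θ : Set (Cyl m l)) : Set (Cyl m l) :=
  {x | x ∈ btm m l θ ∧ ∀ y ∈ btm m l θ, cle m l y x → y = x}

open Classical in
/-- The coefficient a_i of Λ_i in the predominant weight P_θ:
1 if b_i ∈ Γ_max, -1 if b_i ∈ Γ_min, 0 otherwise. -/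
noncomputable def aC (m l : ℕ) (θ : Set (Cyl m l)) (i : ZMod (m + l)) : ℚ :=
  if ∃ x, IsBottomCell m l θ i x ∧ x ∈ btmMax m l θ then 1
  else if ∃ x, IsBottomCell m l θ i x ∧ x ∈ btmMin m l θ then -1 else 0

/-- The pairing ⟨P_θ, β^∨⟩ = Σ_i a_i k_i for β = Σ_i k_i α_i,
where P_θ = Σ_i a_i Λ_i (since ⟨Λ_i, α_j^∨⟩ = δ_{ij} and ⟨Λ_i, d⟩ = 0). -/
noncomputable def pairP (m l : ℕ) (θ : Set (Cyl m l)) (β : Hw (m + l)) : ℚ :=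
  ∑ᶠ i, aC m l θ i * β.1 i

/-- D(P_θ) = {α ∈ R₊ : ⟨P_θ, α^∨⟩ = -1}. -/
def DSet (m l : ℕ) (θ : Set (Cyl m l)) : Set (Hw (m + l)) :=
  {β | β ∈ Rpos (m + l) ∧ pairP m l θ β = -1}

/-- The "inversion set" R(w_θ) = {hk(x) : x ∈ θ}. -/
def RwTheta (m l : ℕ) (θ : Set (Cyl m l)) : Set (Hw (m + l)) := hk m l θ '' θ

/-- The set Π_θ = Π_θ^0 ∪ Π_θ^arm ∪ Π_θ^leg. -/
def PiTheta (m l : ℕ) (θ : Set (Cyl m l)) : Set (Hw (m + l)) :=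
  {v | ∃ x, x ∈ btm m l θ ∧ x ∉ btmMax m l θ ∧ x ∉ btmMin m l θ ∧ v = alC m l x} ∪
  {v | ∃ x, x ∈ btmMax m l θ ∧ v = alC m l x + ∑ᶠ y ∈ armSet m l θ x, alC m l y} ∪
  {v | ∃ x, x ∈ btmMax m l θ ∧ v = alC m l x + ∑ᶠ y ∈ legSet m l θ x, alC m l y}

/-- The modified order ⊴ on R(w_θ): α ⊴ β iff β - α ∈ Σ_{γ∈Π_θ} ℤ≥0 γ. -/
def trile (m l : ℕ) (θ : Set (Cyl m l)) (α β : Hw (m + l)) : Prop :=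
  β - α ∈ AddSubmonoid.closure (PiTheta m l θ)

/-! ## Standard tableaux (encoded by the inverse enumeration e = T⁻¹ : ℤ≥1 → θ) -/

/-- A standard tableau on θ, given by the enumeration e = T⁻¹ : {1,2,…} → θ.
This is precisely the data of an order-preserving bijection T : θ → ℤ≥1. -/
def IsTableau (m l : ℕ) (θ : Set (Cyl m l)) (e : ℕ → Cyl m l) : Prop :=
  Set.InjOn e {a : ℕ | 1 ≤ a} ∧ e '' {a : ℕ | 1 ≤ a} = θ ∧
  ∀ a b : ℕ, 1 ≤ a → 1 ≤ b → cle m l (e a) (e b) → e a ≠ e b → a < b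

/-- A standard tableau on a finite (skew) diagram ξ with |ξ| = n, encoded by
the enumeration e = S⁻¹ : {1,…,n} → ξ. -/
def IsTableauOn (m l : ℕ) (ξ : Set (Cyl m l)) (n : ℕ) (e : ℕ → Cyl m l) : Prop :=
  Set.InjOn e (Set.Icc 1 n) ∧ e '' Set.Icc 1 n = ξ ∧
  ∀ a b : ℕ, a ∈ Set.Icc 1 n → b ∈ Set.Icc 1 n → cle m l (e a) (e b) → e a ≠ e b → a < b

/-- The word (con(e 1), con(e 2), …, con(e n)). -/
def tabWord (m l : ℕ) (e : ℕ → Cyl m l) (n : ℕ) : List (ZMod (m + l)) :=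
  (List.range n).map (fun k => con m l (e (k + 1)))

/-- The semi-infinite Bruhat interval [e, w_{θ,T}) = ⋃_{n≥1} [e, w_{θ,T}[n]]. -/
def semiInt (m l : ℕ) (e : ℕ → Cyl m l) : Set (Hw (m + l) → Hw (m + l)) :=
  ⋃ n ∈ {n : ℕ | 1 ≤ n}, bint (m + l) (wordProd (m + l) (tabWord m l e n))

/-- w is P_θ-pluscule: ⟨P_θ, α^∨⟩ = -1 for every α ∈ R(w). -/
def Pluscule (m l : ℕ) (θ : Set (Cyl m l)) (w : Hw (m + l) → Hw (m + l)) : Prop :=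
  ∀ β ∈ invSet (m + l) w, pairP m l θ β = -1

/-- The generating relation of the heap order ⪯_T on ℤ≥1. -/
def heapRel (m l : ℕ) (e : ℕ → Cyl m l) (a b : ℕ) : Prop :=
  1 ≤ a ∧ a ≤ b ∧
    (con m l (e a) = con m l (e b) ∨
      sFun (m + l) (con m l (e a)) ∘ sFun (m + l) (con m l (e b)) ≠
        sFun (m + l) (con m l (e b)) ∘ sFun (m + l) (con m l (e a)))

/-- The generating relation of the heap order ≤^hp on R(w_θ):
α ≤ β whenever β - α ∈ Q₊ (the ordinary order) and ⟨α, β^∨⟩ ≠ 0. -/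
def hpRel (m l : ℕ) (θ : Set (Cyl m l)) (α β : Hw (m + l)) : Prop :=
  α ∈ RwTheta m l θ ∧ β ∈ RwTheta m l θ ∧ β - α ∈ QPos (m + l) ∧
    pairCo (m + l) α β ≠ 0

/-- v is the Weyl group element w_ξ of a proper order ideal ξ of θ. -/
def IsIdealWord (m l : ℕ) (θ ξ : Set (Cyl m l)) (v : Hw (m + l) → Hw (m + l)) : Prop :=
  IsProperIdealOf m l θ ξ ∧
    ∃ n e, IsTableauOn m l ξ n e ∧ v = wordProd (m + l) (tabWord m l e n)

/-- A proper order ideal of the poset (R(w_θ), ⊴). -/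
def IsProperIdealOfRw (m l : ℕ) (θ : Set (Cyl m l)) (J : Set (Hw (m + l))) : Prop :=
  J ⊆ RwTheta m l θ ∧ J ≠ RwTheta m l θ ∧
    ∀ β ∈ J, ∀ α ∈ RwTheta m l θ, trile m l θ α β → α ∈ J


/-! ### The cylinder order in terms of nonnegative translations -/

lemma con_pr (m l : ℕ) (p : Z2) : con m l (pr m l p) = ((p.2 - p.1 : ℤ) : ZMod (m + l)) := rfl

lemma cle_iff (m l : ℕ) (x y : Cyl m l) :
    cle m l x y ↔ ∃ u v : ℕ, x = y + pr m l ((u : ℤ), (v : ℤ)) := by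
  constructor
  · rintro ⟨a, b, rfl, rfl, h1, h2⟩
    refine ⟨(a.1 - b.1).toNat, (a.2 - b.2).toNat, ?_⟩
    rw [← map_add, Int.toNat_of_nonneg (by omega), Int.toNat_of_nonneg (by omega)]
    congr 1
    ext <;> simp
  · rintro ⟨u, v, rfl⟩
    obtain ⟨b, rfl⟩ := QuotientAddGroup.mk'_surjective _ y
    exact ⟨b + ((u : ℤ), (v : ℤ)), b, map_add _ _ _, rfl, by simp [le2]⟩

lemma cle_refl (m l : ℕ) (x : Cyl m l) : cle m l x x := by
  obtain ⟨b, rfl⟩ := QuotientAddGroup.mk'_surjective _ x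
  exact ⟨b, b, rfl, rfl, le_rfl, le_rfl⟩

lemma cle_trans (m l : ℕ) {x y z : Cyl m l} (h1 : cle m l x y) (h2 : cle m l y z) :
    cle m l x z := by
  rw [cle_iff] at *
  obtain ⟨u, v, rfl⟩ := h1
  obtain ⟨u', v', rfl⟩ := h2
  refine ⟨u' + u, v' + v, ?_⟩
  rw [add_assoc, ← map_add]
  simp

/-- Cells whose contents differ by `0` or `±1` are comparable: after a translation by a
multiple of `ω`, the difference of the lifts is `(s, s + ε)`, whose coordinates cannot have
strictly opposite signs. -/
lemma comparable_of_con (m l : ℕ) (x y : Cyl m l) (ε : ℤ) (hε : ε = 0 ∨ ε = 1 ∨ ε = -1)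
    (h : con m l x - con m l y = (ε : ZMod (m + l))) : cle m l x y ∨ cle m l y x := by
  obtain ⟨⟨s, t⟩, hp⟩ : ∃ p : Z2, pr m l p = x - y := QuotientAddGroup.mk'_surjective _ (x - y)
  rw [← map_sub, ← hp, con_pr, ← sub_eq_zero, ← Int.cast_sub,
    ZMod.intCast_zmod_eq_zero_iff_dvd] at h
  obtain ⟨k, hk⟩ := h
  push_cast at hk
  have hom : pr m l (k • om m l) = 0 :=
    (QuotientAddGroup.eq_zero_iff _).2 (AddSubgroup.mem_zmultiples_iff.2 ⟨k, rfl⟩)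
  obtain ⟨s', hs'⟩ : ∃ s', s' = s + k * m := ⟨_, rfl⟩
  have hp' : pr m l (s', s' + ε) = x - y := by
    rw [← hp, ← add_zero (pr m l (s, t)), ← hom, ← map_add]
    congr 1
    ext
    · simp [om, hs']
    · simp only [om, hs', Prod.snd_add, Prod.smul_snd, smul_eq_mul]
      linear_combination -hk
  by_cases h0 : 0 ≤ s' ∧ 0 ≤ s' + ε
  · left
    rw [cle_iff]
    refine ⟨s'.toNat, (s' + ε).toNat, ?_⟩
    rw [Int.toNat_of_nonneg h0.1, Int.toNat_of_nonneg h0.2, hp']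
    abel
  · right
    rw [cle_iff]
    refine ⟨(-s').toNat, (-(s' + ε)).toNat, ?_⟩
    rw [Int.toNat_of_nonneg (by omega), Int.toNat_of_nonneg (by omega)]
    have : ((-s', -(s' + ε)) : Z2) = -(s', s' + ε) := rfl
    rw [this, map_neg, hp']
    abel

/-! ### Commutation of simple reflections -/

lemma pairSimple_sub_smul (κ : ℕ) [NeZero κ] (ζ : Hw κ) (c : ℚ) (i j : ZMod κ) :
    pairSimple κ (ζ - c • alphaR κ j) i = pairSimple κ ζ i - c * cartan κ i j := by
  simp only [pairSimple, alphaR, finsum_eq_sum_of_fintype]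
  simp [sub_mul, Finset.sum_sub_distrib, Pi.single_apply]
  ring

lemma pairSimple_alphaR (κ : ℕ) [NeZero κ] (i j : ZMod κ) :
    pairSimple κ (alphaR κ j) i = cartan κ i j := by
  simp [pairSimple, alphaR, finsum_eq_sum_of_fintype, Pi.single_apply]

lemma sFun_comm (κ : ℕ) [NeZero κ] (i j : ZMod κ)
    (hij : cartan κ i j = 0) (hji : cartan κ j i = 0) :
    sFun κ i ∘ sFun κ j = sFun κ j ∘ sFun κ i := by
  funext ζ
  simp only [Function.comp, sFun, pairSimple_sub_smul, hij, hji]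
  simp only [mul_zero, sub_zero]
  abel

/-- The two products are distinguished by the coefficient of `α_i` in the image of `α_j`,
which is `a_{ij}` for `s_i s_j` and `-a_{ij}` for `s_j s_i`. -/
lemma sFun_not_comm (κ : ℕ) [NeZero κ] (i j : ZMod κ) (hne : i ≠ j)
    (hij : cartan κ i j ≠ 0) :
    sFun κ i ∘ sFun κ j ≠ sFun κ j ∘ sFun κ i := by
  intro h
  have h2 := congrFun (congrArg Prod.fst (congrFun h (alphaR κ j))) i
  simp only [Function.comp, sFun, pairSimple_sub_smul, pairSimple_alphaR] at h2
  simp [alphaR, hne] at h2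
  have h1 : (1 : ZMod κ) ≠ 0 := by
    intro h1
    exact hne (by rw [← mul_one i, ← mul_one j, h1, mul_zero, mul_zero])
  have hd : cartan κ j j = 2 := by simp [cartan, h1, h1.symm]
  rcases h2 with h2 | h2
  · rw [hd] at h2
    norm_num at h2
  · exact hij h2

lemma cartan_zero (κ : ℕ) (i j : ZMod κ) (h0 : i - j ≠ 0) (h1 : i - j ≠ 1) (h2 : i - j ≠ -1) :
    cartan κ i j = 0 := by
  simp [cartan, h1, h2, sub_ne_zero.1 h0]

lemma cartan_ne_zero (κ : ℕ) (i j : ZMod κ) (h0 : i ≠ j) (h : i - j = 1 ∨ i - j = -1) :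
    cartan κ i j ≠ 0 := by
  unfold cartan
  rw [if_neg h0]
  rcases h with h | h <;> rw [h] <;> split_ifs <;> norm_num at *

/-! ### The heap order -/

lemma cle_of_heapRel (m l : ℕ) (hm : 1 ≤ m) (θ : Set (Cyl m l))
    (e : ℕ → Cyl m l) (he : IsTableau m l θ e) (a b : ℕ) (h : heapRel m l e a b) :
    cle m l (e a) (e b) := by
  obtain ⟨ha, hab, h⟩ := h
  have : NeZero (m + l) := ⟨by omega⟩
  have hcmp : cle m l (e a) (e b) ∨ cle m l (e b) (e a) := by
    by_cases h0 : con m l (e a) - con m l (e b) = 0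
    · exact comparable_of_con m l _ _ 0 (by simp) (by simpa using h0)
    by_cases h1 : con m l (e a) - con m l (e b) = 1
    · exact comparable_of_con m l _ _ 1 (by simp) (by simpa using h1)
    by_cases h2 : con m l (e a) - con m l (e b) = -1
    · exact comparable_of_con m l _ _ (-1) (by simp) (by simpa using h2)
    exfalso
    rcases h with h | h
    · exact h0 (sub_eq_zero.2 h)
    · refine h (sFun_comm _ _ _ (cartan_zero _ _ _ h0 h1 h2) (cartan_zero _ _ _ ?_ ?_ ?_))
      · exact fun h' => h0 (by rw [← neg_sub, h', neg_zero])
      · exact fun h' => h2 (by rw [← neg_sub, h'])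
      · exact fun h' => h1 (by rw [← neg_sub, h', neg_neg])
  rcases hcmp with h | h
  · exact h
  · by_cases heq : e b = e a
    · rw [heq]; exact cle_refl _ _ _
    · have := he.2.2 b a (by omega) ha h heq
      omega

/-- Comparable cells with contents differing by `±1` are related in the heap. -/
lemma heapRel_of_step (m l : ℕ) (hm : 1 ≤ m) (θ : Set (Cyl m l))
    (e : ℕ → Cyl m l) (he : IsTableau m l θ e) (a c : ℕ) (ha : 1 ≤ a) (hc : 1 ≤ c)
    (h : cle m l (e a) (e c))
    (hcon : con m l (e a) - con m l (e c) = 1 ∨ con m l (e a) - con m l (e c) = -1) :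
    heapRel m l e a c := by
  have : NeZero (m + l) := ⟨by omega⟩
  by_cases heq : e a = e c
  · obtain rfl := he.1 ha hc heq
    exact ⟨ha, le_rfl, Or.inl rfl⟩
  refine ⟨ha, (he.2.2 a c ha hc h heq).le, ?_⟩
  by_cases hne : con m l (e a) = con m l (e c)
  · exact Or.inl hne
  · exact Or.inr (sFun_not_comm _ _ _ hne (cartan_ne_zero _ _ _ hne hcon))

lemma heap_of_translate (m l : ℕ) (hm : 1 ≤ m) (θ : Set (Cyl m l))
    (hθ : IsCylindric m l θ) (e : ℕ → Cyl m l) (he : IsTableau m l θ e) (b : ℕ) (hb : 1 ≤ b)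
    (u v : ℕ) : ∀ a, 1 ≤ a → e a = e b + pr m l ((u : ℤ), (v : ℤ)) →
      Relation.ReflTransGen (heapRel m l e) a b := by
  -- A unit step from `e a` up to `z` stays in the filter `θ`, so `z = e c` for some `c`.
  have step : ∀ a, 1 ≤ a → ∀ z : Cyl m l, ∀ d : Z2, d = (1, 0) ∨ d = (0, 1) →
      e a = z + pr m l d → ∃ c, 1 ≤ c ∧ e c = z ∧ heapRel m l e a c := by
    intro a ha z d hd hz
    have hle : cle m l (e a) z := by
      rw [cle_iff]
      rcases hd with rfl | rfl
      · exact ⟨1, 0, by simpa using hz⟩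
      · exact ⟨0, 1, by simpa using hz⟩
    have haθ : e a ∈ θ := by rw [← he.2.1]; exact ⟨a, ha, rfl⟩
    have hzθ : z ∈ θ := hθ.2.2 _ haθ _ hle
    rw [← he.2.1] at hzθ
    obtain ⟨c, hc, rfl⟩ := hzθ
    refine ⟨c, hc, rfl, heapRel_of_step m l hm θ e he a c ha hc hle ?_⟩
    rw [hz, map_add, add_sub_cancel_left, con_pr]
    rcases hd with rfl | rfl <;> simp
  induction u with
  | zero =>
    induction v with
    | zero =>
      intro a ha h
      have h' : e a = e b := by
        rw [h, show (((0 : ℕ) : ℤ), ((0 : ℕ) : ℤ)) = (0 : Z2) from rfl, map_zero, add_zero]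
      rw [he.1 ha hb h']
    | succ v ih =>
      intro a ha h
      obtain ⟨c, hc, hce, hac⟩ := step a ha (e b + pr m l (((0 : ℕ) : ℤ), (v : ℤ))) (0, 1)
        (Or.inr rfl) (by rw [h, add_assoc, ← map_add]; simp)
      exact Relation.ReflTransGen.head hac (ih c hc hce)
  | succ u ih =>
    intro a ha h
    obtain ⟨c, hc, hce, hac⟩ := step a ha (e b + pr m l ((u : ℤ), (v : ℤ))) (1, 0)
      (Or.inl rfl) (by rw [h, add_assoc, ← map_add]; simp)
    exact Relation.ReflTransGen.head hac (ih c hc hce)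

/-- Proposition 3.12: T : (θ, ≤) → (ℤ≥1, ⪯_T) is an order isomorphism,
where ⪯_T is the heap order. (Stated via the inverse enumeration e = T⁻¹:
for a, b ≥ 1, e a ≤ e b in θ iff a ⪯_T b.) -/
theorem statement_12 (m l : ℕ) (hm : 1 ≤ m) (hl : 1 ≤ l)
    (θ : Set (Cyl m l)) (hθ : IsCylindric m l θ)
    (e : ℕ → Cyl m l) (he : IsTableau m l θ e) :
    ∀ a b : ℕ, 1 ≤ a → 1 ≤ b →
      (cle m l (e a) (e b) ↔ Relation.ReflTransGen (heapRel m l e) a b) := by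
  intro a b ha hb
  constructor
  · intro h
    obtain ⟨u, v, huv⟩ := (cle_iff m l _ _).1 h
    exact heap_of_translate m l hm θ hθ e he b hb u v a ha huv
  · intro h
    induction h with
    | refl => exact cle_refl _ _ _
    | @tail c d _ hcd ih =>
      exact cle_trans m l (ih (hcd.1)) (cle_of_heapRel m l hm θ e he c d hcd)

end CylPaper
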